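/- Mating preserves vertical pasting: in a bicategory, let σ : k ∘ f ⟶ f' ∘ h and τ : h ∘ g ⟶ g' ∘ k be mates with respect to adjunctions f ⊣ g and f' ⊣ g', and let σ' : k' ∘ f' ⟶ f'' ∘ h' and τ' : h' ∘ g' ⟶ g'' ∘ k' be mates with respect to f' ⊣ g' and f'' ⊣ g''. Then the vertical pasting of σ and σ' (a 2-cell (k' ∘ k) ∘ f ⟶ f'' ∘ (h' ∘ h), up to structural isomorphisms) and the vertical pasting of τ and τ' (a 2-cell (h' ∘ h) ∘ g ⟶ g'' ∘ (k' ∘ k)) are mates with respect to f ⊣ g and f'' ⊣ g''. -/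

import Mathlib

/-!
In the vertical pasting of the mates of `σ` and `σ'`, the unit of `f' ⊣ g'` used by the first and
its counit used by the second can be brought next to each other by the interchange law. The
left triangle identity of `f' ⊣ g'` cancels them, leaving the mate of the vertical pasting of `σ`
and `σ'`. This is `Bicategory.mateEquiv_vcomp`; it applies because, by coherence, `rightMate` equals
Mathlib's `Bicategory.mateEquiv` (`rightMate_eq_mateEquiv`) and both pastings equal Mathlib's
vertical composites `vcomp`.
-/

/-!
STATEMENT 9: Mating preserves vertical pasting.  If `σ`/`τ` are mates with respect to
`f ⊣ g` and `f' ⊣ g'` (with connecting 1-cells `h : a ⟶ a'`, `k : b ⟶ b'`) and `σ'`/`τ'`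
are mates with respect to `f' ⊣ g'` and `f'' ⊣ g''` (with connecting 1-cells `h'`, `k'`),
then the vertical pastings of `σ, σ'` and of `τ, τ'` are mates with respect to `f ⊣ g` and
`f'' ⊣ g''` (with connecting 1-cells `h ≫ h'` and `k ≫ k'`).

Conventions: `≫` is diagrammatic (the paper's `h' ∘ h` is `h ≫ h'`); following the
paper's pasting diagrams, `σ : h ≫ f' ⟶ f ≫ k` and `τ : g ≫ h ⟶ k ≫ g'`, etc.
-/

open CategoryTheory Category Bicategory
open scoped Bicategory

universe w v u

namespace Thesis

variable {B : Type u} [Bicategory.{w, v} B]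

/-- The right mate of `σ`, obtained by pasting `σ` with the unit of `f' ⊣ g'` and the counit
of `f ⊣ g`. -/
def rightMate {a b a' b' : B} {f : a ⟶ b} {g : b ⟶ a} {f' : a' ⟶ b'} {g' : b' ⟶ a'}
    (adj : f ⊣ g) (adj' : f' ⊣ g') (h : a ⟶ a') (k : b ⟶ b')
    (σ : h ≫ f' ⟶ f ≫ k) : g ≫ h ⟶ k ≫ g' :=
  𝟙 (g ≫ h) ⊗≫ (g ≫ h) ◁ adj'.unit ⊗≫ g ◁ σ ▷ g' ⊗≫ adj.counit ▷ (k ≫ g') ⊗≫ 𝟙 (k ≫ g')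

/-- The two sides differ only in the placement of structural isomorphisms, so they agree by
coherence. -/
lemma rightMate_eq_mateEquiv {a b a' b' : B} {f : a ⟶ b} {g : b ⟶ a} {f' : a' ⟶ b'}
    {g' : b' ⟶ a'} (adj : f ⊣ g) (adj' : f' ⊣ g') (h : a ⟶ a') (k : b ⟶ b')
    (σ : h ≫ f' ⟶ f ≫ k) : rightMate adj adj' h k σ = mateEquiv adj adj' σ := by
  rw [mateEquiv_apply', rightMate]
  bicategory

theorem mates_vertical_pasting
    {a b a' b' a'' b'' : B}
    {f : a ⟶ b} {g : b ⟶ a} {f' : a' ⟶ b'} {g' : b' ⟶ a'} {f'' : a'' ⟶ b''} {g'' : b'' ⟶ a''}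
    (adj : f ⊣ g) (adj' : f' ⊣ g') (adj'' : f'' ⊣ g'')
    (h : a ⟶ a') (k : b ⟶ b') (h' : a' ⟶ a'') (k' : b' ⟶ b'')
    (σ : h ≫ f' ⟶ f ≫ k) (σ' : h' ≫ f'' ⟶ f' ≫ k')
    (τ : g ≫ h ⟶ k ≫ g') (τ' : g' ≫ h' ⟶ k' ≫ g'')
    (hστ : τ = rightMate adj adj' h k σ)
    (hσ'τ' : τ' = rightMate adj' adj'' h' k' σ') :
    (𝟙 (g ≫ h ≫ h') ⊗≫ τ ▷ h' ⊗≫ k ◁ τ' ⊗≫ 𝟙 ((k ≫ k') ≫ g'') :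
        g ≫ h ≫ h' ⟶ (k ≫ k') ≫ g'') =
      rightMate adj adj'' (h ≫ h') (k ≫ k')
        (𝟙 ((h ≫ h') ≫ f'') ⊗≫ h ◁ σ' ⊗≫ σ ▷ k' ⊗≫ 𝟙 (f ≫ k ≫ k')) := by
  subst hστ hσ'τ'
  simp only [rightMate_eq_mateEquiv]
  have left : (𝟙 ((h ≫ h') ≫ f'') ⊗≫ h ◁ σ' ⊗≫ σ ▷ k' ⊗≫ 𝟙 (f ≫ k ≫ k')) =
      leftAdjointSquare.vcomp σ σ' := by
    dsimp only [leftAdjointSquare.vcomp]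
    bicategory
  rw [left, Bicategory.mateEquiv_vcomp adj adj' adj'']
  dsimp only [rightAdjointSquare.vcomp]
  bicategory

end Thesis
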